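/- Let n, ℓ, r ≥ 2. The minimum size of a set M ⊆ C([n],r) of r-subsets of [n] with the property that every ℓ-subset L ⊆ [n] contains a pair {a,b} ⊆ L whose full star {E ∈ C([n],r) : {a,b} ⊆ E} is contained in M, equals C(n,r) − t_r(n,ℓ−1). Equivalently, the initial degree of the missing codegree-star ideal J^{(r)}_{n,ℓ} is C(n,r) − t_r(n,ℓ−1). -/

import Mathlib

/-- The `i`-th balanced part size of a partition of `n` into `q` parts. -/
def balancedPart (n q : ℕ) (i : Fin q) : ℕ :=
  n / q + if (i : ℕ) < n % q then 1 else 0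

/-- `t_r(n,q) = ∑_{S ⊆ [q], |S| = r} ∏_{i ∈ S} n_i`, the number of edges of the
complete balanced `q`-partite `r`-graph on `n` vertices. -/
def turanNum (n q r : ℕ) : ℕ :=
  ∑ S ∈ (Finset.univ : Finset (Fin q)).powersetCard r, ∏ i ∈ S, balancedPart n q i

/-!
Write `F` for the complement of `M` in the family of all `r`-sets. Then `M` satisfies the covering
condition exactly when the graph of all pairs contained in a member of `F` has no `ℓ`-clique, and
every member of `F` is a clique of that graph. So the theorem amounts to Zykov's theorem: among
graphs on `n` vertices without a `(q + 1)`-clique, the maximal number of `r`-cliques is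
`turanNum n q r`.

For the upper bound let `s` be the vertex set, choose a vertex `v` in the largest number of
`(r + 1)`-cliques, and let `A` be its neighbourhood. Each `(r + 1)`-clique lies in `A` or meets
`s \ A`, and every vertex is in at most `k_r(A)` of them, where `k_r(A)` counts the `r`-cliques in
`A`; so there are at most `k_{r+1}(A) + |s \ A| * k_r(A)`. As `A` has no `q`-clique, induction
bounds this by the elementary symmetric polynomial `e_{r+1}` of `q` part sizes with sum `|s|`, and
balancing the parts only increases `e_{r+1}`. Complete multipartite graphs with balanced parts
attain the bound.
-/

section ElementarySymmetric

variable {R : Type*} [CommSemiring R]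

lemma esymm_zero (s : Multiset R) : s.esymm 0 = 1 := by
  simp [Multiset.esymm]

lemma esymm_cons_succ (a : R) (s : Multiset R) (k : ℕ) :
    (a ::ₘ s).esymm (k + 1) = s.esymm (k + 1) + a * s.esymm k := by
  simp [Multiset.esymm, Multiset.powersetCard_cons, Multiset.sum_map_mul_left]

lemma esymm_cons_cons_one (x y : R) (s : Multiset R) :
    (x ::ₘ y ::ₘ s).esymm 1 = s.esymm 1 + (x + y) := by
  simp only [esymm_cons_succ, esymm_zero]
  ring

lemma esymm_cons_cons_add_two (x y : R) (s : Multiset R) (k : ℕ) :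
    (x ::ₘ y ::ₘ s).esymm (k + 2) =
      s.esymm (k + 2) + (x + y) * s.esymm (k + 1) + x * y * s.esymm k := by
  simp only [esymm_cons_succ]
  ring

lemma esymm_cons_cons_le [PartialOrder R] [CanonicallyOrderedAdd R] [IsOrderedRing R]
    {x y x' y' : R} (hadd : x + y = x' + y') (hmul : x * y ≤ x' * y') (s : Multiset R) (k : ℕ) :
    (x ::ₘ y ::ₘ s).esymm k ≤ (x' ::ₘ y' ::ₘ s).esymm k := by
  match k with
  | 0 => simp only [esymm_zero, le_refl]
  | 1 => simp only [esymm_cons_cons_one, hadd, le_refl]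
  | k + 2 =>
    rw [esymm_cons_cons_add_two, esymm_cons_cons_add_two, hadd]
    gcongr

end ElementarySymmetric

section Balanced

lemma eq_replicate_add_replicate_of_equitableOn {s : Multiset ℕ}
    (hs : {x | x ∈ s}.EquitableOn id) :
    s = Multiset.replicate (s.card - s.sum % s.card) (s.sum / s.card) +
      Multiset.replicate (s.sum % s.card) (s.sum / s.card + 1) := by
  rcases eq_or_ne s 0 with rfl | hne
  · simp
  obtain ⟨m, hm, hmin⟩ : ∃ m ∈ s, ∀ x ∈ s, m ≤ x := by
    simpa using s.toFinset.exists_min_image id (Multiset.toFinset_nonempty.2 hne)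
  obtain ⟨u, c, hu, hsplit⟩ : ∃ u c, 0 < u ∧
      s = Multiset.replicate u m + Multiset.replicate c (m + 1) := by
    refine ⟨s.count m, (s.filter (¬ m = ·)).card, Multiset.count_pos.2 hm, ?_⟩
    have hrest : ∀ x ∈ s.filter (¬ m = ·), x = m + 1 := fun x hx => by
      obtain ⟨hx, hmx⟩ := Multiset.mem_filter.1 hx
      have hle : x ≤ m + 1 := hs hx hm
      have := hmin x hx
      omega
    rw [← Multiset.eq_replicate_card.2 hrest, ← Multiset.filter_eq, Multiset.filter_add_not]
  have hcard : s.card = u + c := by simp [hsplit]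
  have hsum : s.sum = (u + c) * m + c := by
    rw [hsplit]
    simp only [Multiset.sum_add, Multiset.sum_replicate, smul_eq_mul]
    ring
  have hdiv : s.sum / s.card = m := by
    rw [hsum, hcard, Nat.mul_add_div (by omega), Nat.div_eq_of_lt (by omega), add_zero]
  have hmod : s.sum % s.card = c := by
    rw [hsum, hcard, Nat.mul_add_mod, Nat.mod_eq_of_lt (by omega)]
  rw [hdiv, hmod, hcard, Nat.add_sub_cancel, ← hsplit]

lemma eq_of_equitableOn_of_card_eq_of_sum_eq {s t : Multiset ℕ} (hs : {x | x ∈ s}.EquitableOn id)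
    (ht : {x | x ∈ t}.EquitableOn id) (hcard : s.card = t.card) (hsum : s.sum = t.sum) :
    s = t := by
  rw [eq_replicate_add_replicate_of_equitableOn hs, eq_replicate_add_replicate_of_equitableOn ht,
    hcard, hsum]

/-- The part sizes of a balanced partition of `n` into `q` parts, as a multiset. This makes
`turanNum n q r` an elementary symmetric polynomial, see `esymm_balancedParts`. -/
def balancedParts (n q : ℕ) : Multiset ℕ :=
  (Finset.univ : Finset (Fin q)).val.map (balancedPart n q)

lemma esymm_balancedParts (n q r : ℕ) : (balancedParts n q).esymm r = turanNum n q r :=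
  Finset.esymm_map_val _ _ _

lemma card_balancedParts (n q : ℕ) : (balancedParts n q).card = q := by
  simp [balancedParts]

lemma equitableOn_balancedParts (n q : ℕ) : {x | x ∈ balancedParts n q}.EquitableOn id := by
  refine Set.equitableOn_iff_exists_eq_eq_add_one.2 ⟨n / q, fun x hx => ?_⟩
  obtain ⟨i, -, rfl⟩ : ∃ i ∈ Finset.univ.val, balancedPart n q i = x := Multiset.mem_map.1 hx
  by_cases h : (i : ℕ) < n % q <;> simp [balancedPart, h]

lemma sum_balancedPart {q : ℕ} (n : ℕ) (hq : q ≠ 0) : ∑ i, balancedPart n q i = n := by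
  simp only [balancedPart, Finset.sum_add_distrib, Finset.sum_const, Finset.card_univ,
    Fintype.card_fin, smul_eq_mul, Finset.sum_boole, Fin.card_filter_val_lt, Nat.cast_id]
  rw [min_eq_right (Nat.mod_lt n (Nat.pos_of_ne_zero hq)).le, Nat.div_add_mod]

lemma sum_balancedParts {n q : ℕ} (h : q = 0 → n = 0) : (balancedParts n q).sum = n := by
  rcases eq_or_ne q 0 with rfl | hq
  · simp [balancedParts, h rfl]
  · exact sum_balancedPart n hq

-- Moving one unit from a part `z + 1` to a part `y < z` keeps the sum and increases the product
-- of the two parts, while the sum of squares drops, so that repeated moves terminate.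
lemma exists_esymm_le_of_not_equitableOn {s : Multiset ℕ} (hs : ¬ {x | x ∈ s}.EquitableOn id) :
    ∃ t : Multiset ℕ, t.card = s.card ∧ t.sum = s.sum ∧
      (t.map (· ^ 2)).sum < (s.map (· ^ 2)).sum ∧ ∀ r, s.esymm r ≤ t.esymm r := by
  obtain ⟨x, hx, y, hy, hyx : y + 1 < x⟩ := Set.not_equitableOn.1 hs
  obtain ⟨z, rfl⟩ : ∃ z, x = z + 1 := ⟨x - 1, by omega⟩
  obtain ⟨t, rfl⟩ := Multiset.exists_cons_of_mem hx
  have hyt : y ∈ t := (Multiset.mem_cons.1 hy).resolve_left (by omega)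
  obtain ⟨t, rfl⟩ := Multiset.exists_cons_of_mem hyt
  refine ⟨z ::ₘ (y + 1) ::ₘ t, by simp only [Multiset.card_cons], ?_, ?_,
    esymm_cons_cons_le (by omega) (by nlinarith) t⟩
  · simp only [Multiset.sum_cons]
    omega
  · simp only [Multiset.map_cons, Multiset.sum_cons]
    nlinarith

theorem esymm_le_turanNum (s : Multiset ℕ) (r : ℕ) : s.esymm r ≤ turanNum s.sum s.card r := by
  by_cases hs : {x | x ∈ s}.EquitableOn id
  · have hsum : s.card = 0 → s.sum = 0 := fun h => by simp [Multiset.card_eq_zero.1 h]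
    have hbalanced : s = balancedParts s.sum s.card :=
      eq_of_equitableOn_of_card_eq_of_sum_eq hs (equitableOn_balancedParts _ _)
        (card_balancedParts _ _).symm (sum_balancedParts hsum).symm
    rw [← esymm_balancedParts, ← hbalanced]
  · obtain ⟨t, hcard, hsum, hsq, hle⟩ := exists_esymm_le_of_not_equitableOn hs
    rw [← hcard, ← hsum]
    exact (hle r).trans (esymm_le_turanNum t r)
termination_by (s.map (· ^ 2)).sum
decreasing_by exact hsq

lemma turanNum_succ_add_mul_le {a b q r : ℕ} (h : q = 0 → a = 0) :
    turanNum a q (r + 1) + b * turanNum a q r ≤ turanNum (b + a) (q + 1) (r + 1) := by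
  have hesymm := esymm_le_turanNum (b ::ₘ balancedParts a q) (r + 1)
  rwa [esymm_cons_succ, esymm_balancedParts, esymm_balancedParts, Multiset.sum_cons,
    Multiset.card_cons, sum_balancedParts h, card_balancedParts] at hesymm

end Balanced

section Zykov

open Finset

variable {V : Type*} {G : SimpleGraph V} {r : ℕ} {s E : Finset V}

lemma eq_empty_of_cliqueFreeOn_one (hs : G.CliqueFreeOn s 1) : s = ∅ :=
  eq_empty_of_forall_notMem fun x hx =>
    hs (t := {x}) (by simpa using hx) (SimpleGraph.isNClique_singleton.2 rfl)

variable [DecidableEq V] [DecidableRel G.Adj]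

/-- The `r`-cliques of `G` contained in `s`; unlike `SimpleGraph.cliqueFinset` it is relative to a
finite vertex set, over which the induction in Zykov's theorem runs. -/
def cliquesIn (G : SimpleGraph V) [DecidableRel G.Adj] (r : ℕ) (s : Finset V) : Finset (Finset V) :=
  {E ∈ s.powersetCard r | G.IsClique E}

lemma mem_cliquesIn : E ∈ cliquesIn G r s ↔ E ⊆ s ∧ G.IsNClique r E := by
  simp [cliquesIn, SimpleGraph.isNClique_iff, mem_powersetCard, and_assoc, and_comm (a := #E = r)]

lemma cliquesIn_univ [Fintype V] : cliquesIn G r univ = G.cliqueFinset r := by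
  ext E
  simp [mem_cliquesIn]

lemma card_cliquesIn_zero : #(cliquesIn G 0 s) = 1 := by
  simp [cliquesIn, filter_singleton]

lemma cliquesIn_empty_succ : cliquesIn G (r + 1) ∅ = ∅ := by
  simp [cliquesIn]

lemma card_filter_mem_cliquesIn_succ_le (v : V) :
    #{E ∈ cliquesIn G (r + 1) s | v ∈ E} ≤ #(cliquesIn G r {a ∈ s | G.Adj v a}) := by
  refine card_le_card_of_injOn (·.erase v) (fun E hE => ?_) fun E hE F hF h => ?_
  · obtain ⟨hE, hv⟩ := mem_filter.1 hE
    obtain ⟨hEs, hclique⟩ := mem_cliquesIn.1 hE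
    refine mem_cliquesIn.2 ⟨fun a ha => ?_, hclique.erase_of_mem hv⟩
    obtain ⟨hav, ha⟩ := mem_erase.1 ha
    exact mem_filter.2 ⟨hEs ha, hclique.isClique hv ha hav.symm⟩
  · exact (erase_injOn' v) (mem_filter.1 hE).2 (mem_filter.1 hF).2 h

lemma card_cliquesIn_le_add_sum (A : Finset V) :
    #(cliquesIn G r s) ≤
      #(cliquesIn G r A) + ∑ b ∈ s \ A, #{E ∈ cliquesIn G r s | b ∈ E} := by
  have hcover : cliquesIn G r s ⊆
      cliquesIn G r A ∪ (s \ A).biUnion fun b => {E ∈ cliquesIn G r s | b ∈ E} := fun E hE => by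
    obtain ⟨hEs, hclique⟩ := mem_cliquesIn.1 hE
    by_cases hEA : E ⊆ A
    · exact mem_union_left _ (mem_cliquesIn.2 ⟨hEA, hclique⟩)
    · obtain ⟨b, hbE, hbA⟩ := not_subset.1 hEA
      exact mem_union_right _ <| mem_biUnion.2
        ⟨b, mem_sdiff.2 ⟨hEs hbE, hbA⟩, mem_filter.2 ⟨hE, hbE⟩⟩
  exact (card_le_card hcover).trans <| (card_union_le _ _).trans <|
    Nat.add_le_add_left card_biUnion_le _

lemma exists_card_cliquesIn_succ_le (G : SimpleGraph V) [DecidableRel G.Adj] (r : ℕ)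
    (hs : s.Nonempty) :
    ∃ v ∈ s, #(cliquesIn G (r + 1) s) ≤ #(cliquesIn G (r + 1) {a ∈ s | G.Adj v a}) +
      #(s \ {a ∈ s | G.Adj v a}) * #(cliquesIn G r {a ∈ s | G.Adj v a}) := by
  obtain ⟨v, hv, hmax⟩ := exists_max_image s (fun b => #{E ∈ cliquesIn G (r + 1) s | b ∈ E}) hs
  refine ⟨v, hv, (card_cliquesIn_le_add_sum {a ∈ s | G.Adj v a}).trans ?_⟩
  gcongr
  exact sum_le_card_nsmul _ _ _ fun b hb =>
    (hmax b (mem_sdiff.1 hb).1).trans (card_filter_mem_cliquesIn_succ_le v)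

theorem card_cliquesIn_le_turanNum {s : Finset V} {q : ℕ} (r : ℕ)
    (hs : G.CliqueFreeOn s (q + 1)) :
    #(cliquesIn G r s) ≤ turanNum #s q r := by
  match q, r with
  | q, 0 => rw [card_cliquesIn_zero, ← esymm_balancedParts, esymm_zero]
  | 0, r + 1 => simp [eq_empty_of_cliqueFreeOn_one hs, cliquesIn_empty_succ]
  | q + 1, r + 1 =>
    rcases s.eq_empty_or_nonempty with rfl | hne
    · simp [cliquesIn_empty_succ]
    obtain ⟨v, hv, hcount⟩ := exists_card_cliquesIn_succ_le G r hne
    set A : Finset V := {a ∈ s | G.Adj v a}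
    have hA : G.CliqueFreeOn A (q + 1) := by
      refine (hs.of_succ _ hv).subset _ fun a ha => ?_
      simpa [A] using ha
    have hq : q = 0 → #A = 0 := by
      rintro rfl
      rw [eq_empty_of_cliqueFreeOn_one hA, card_empty]
    calc #(cliquesIn G (r + 1) s)
        ≤ #(cliquesIn G (r + 1) A) + #(s \ A) * #(cliquesIn G r A) := hcount
      _ ≤ turanNum #A q (r + 1) + #(s \ A) * turanNum #A q r := by
        gcongr <;> exact card_cliquesIn_le_turanNum _ hA
      _ ≤ turanNum (#(s \ A) + #A) (q + 1) (r + 1) := turanNum_succ_add_mul_le hq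
      _ = turanNum #s (q + 1) (r + 1) := by rw [card_sdiff_add_card_eq_card (filter_subset _ _)]

theorem card_cliqueFinset_le_turanNum [Fintype V] {q : ℕ} (r : ℕ) (hG : G.CliqueFree (q + 1)) :
    #(G.cliqueFinset r) ≤ turanNum (Fintype.card V) q r := by
  rw [← cliquesIn_univ, ← card_univ]
  exact card_cliquesIn_le_turanNum r hG.cliqueFreeOn

end Zykov

section CompleteMultipartite

open Finset

variable {V ι : Type*}

lemma exists_card_fiber_eq [Fintype V] [Fintype ι] [DecidableEq ι] {c : ι → ℕ}
    (hc : ∑ i, c i = Fintype.card V) : ∃ f : V → ι, ∀ i, #{v | f v = i} = c i := by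
  obtain ⟨e⟩ : Nonempty (V ≃ Σ i, Fin (c i)) := Fintype.card_eq.1 (by simp [hc])
  refine ⟨fun v => (e v).1, fun i => ?_⟩
  rw [← Fintype.card_subtype, Fintype.card_congr
    ((e.subtypeEquivOfSubtype (p := (·.1 = i))).trans (Equiv.sigmaSubtype i)), Fintype.card_fin]

lemma isClique_comap_top_iff {f : V → ι} {s : Set V} :
    ((⊤ : SimpleGraph ι).comap f).IsClique s ↔ s.InjOn f := by
  simp only [SimpleGraph.isClique_iff, Set.Pairwise, SimpleGraph.comap_adj, SimpleGraph.top_adj,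
    Set.InjOn, not_imp_not, ne_eq]

lemma cliqueFree_comap_top [Fintype ι] (f : V → ι) :
    ((⊤ : SimpleGraph ι).comap f).CliqueFree (Fintype.card ι + 1) :=
  SimpleGraph.Colorable.cliqueFree (SimpleGraph.Coloring.colorable ⟨f, id⟩) (Nat.lt_succ_self _)

variable [Fintype V] [DecidableEq ι]

lemma card_bijOn_eq_prod (f : V → ι) (S : Finset ι)
    [DecidablePred fun E : Finset V => Set.BijOn f E S] :
    #{E : Finset V | Set.BijOn f E S} = ∏ i ∈ S, #{v | f v = i} := by
  classical
  rw [← card_pi, eq_comm]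
  have map_eq {g : ∀ i ∈ S, V} (hg : g ∈ S.pi fun i => {v | f v = i}) (i : ι) (hi : i ∈ S) :
      f (g i hi) = i := by
    simpa using mem_pi.1 hg i hi
  refine card_bij (fun g _ => S.attach.image fun i => g i.1 i.2) (fun g hg => ?_)
    (fun g hg g' hg' h => ?_) fun E hE => ?_
  · simp only [mem_filter_univ, coe_image, coe_attach, Set.image_univ]
    refine ⟨?_, ?_, fun i hi => ⟨g i hi, ⟨⟨i, hi⟩, rfl⟩, map_eq hg i hi⟩⟩
    · rintro _ ⟨i, rfl⟩
      simp [map_eq hg]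
    · rintro _ ⟨i, rfl⟩ _ ⟨j, rfl⟩ hij
      simp only [map_eq hg] at hij
      rw [Subtype.ext hij]
  · funext i hi
    have hmem : g i hi ∈ S.attach.image fun j => g' j.1 j.2 :=
      h ▸ mem_image_of_mem _ (mem_attach S ⟨i, hi⟩)
    obtain ⟨⟨j, hj⟩, -, hji⟩ := mem_image.1 hmem
    obtain rfl : j = i := by rw [← map_eq hg' j hj, hji, map_eq hg]
    exact hji.symm
  · obtain ⟨hmaps, hinj, hsurj⟩ := (mem_filter_univ _).1 hE
    choose g hgE hg using hsurj
    refine ⟨fun i hi => g hi, mem_pi.2 fun i hi => by simp [hg], ?_⟩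
    ext v
    simp only [mem_image, mem_attach, true_and, Subtype.exists]
    exact ⟨fun ⟨i, hi, h⟩ => h ▸ hgE hi,
      fun hv => ⟨f v, hmaps hv, hinj (hgE _) hv (hg _)⟩⟩

lemma card_cliqueFinset_comap_top [DecidableEq V] [Fintype ι] (f : V → ι) (r : ℕ) :
    #(((⊤ : SimpleGraph ι).comap f).cliqueFinset r) =
      ∑ S ∈ (univ : Finset ι).powersetCard r, ∏ i ∈ S, #{v | f v = i} := by
  classical
  have mem_iff {E : Finset V} : E ∈ ((⊤ : SimpleGraph ι).comap f).cliqueFinset r ↔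
      Set.InjOn f E ∧ #E = r := by
    rw [SimpleGraph.mem_cliqueFinset_iff, SimpleGraph.isNClique_iff, isClique_comap_top_iff]
  have image_mem {E : Finset V} (hE : E ∈ ((⊤ : SimpleGraph ι).comap f).cliqueFinset r) :
      E.image f ∈ univ.powersetCard r := by
    obtain ⟨hinj, hcard⟩ := mem_iff.1 hE
    rw [mem_powersetCard_univ, card_image_of_injOn hinj, hcard]
  rw [card_eq_sum_card_fiberwise fun E hE => image_mem hE]
  refine sum_congr rfl fun S hS => ?_
  rw [← card_bijOn_eq_prod]
  congr 1
  ext E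
  rw [mem_filter, mem_filter_univ, mem_iff]
  constructor
  · rintro ⟨⟨hinj, -⟩, rfl⟩
    simpa using hinj.bijOn_image
  · intro hbij
    have himage : E.image f = S := by exact_mod_cast hbij.image_eq
    have hcard : #E = r := by
      rw [← card_image_of_injOn hbij.injOn, himage, mem_powersetCard_univ.1 hS]
    exact ⟨⟨hbij.injOn, hcard⟩, himage⟩

theorem exists_card_cliqueFinset_comap_top_eq_turanNum (V : Type*) [Fintype V] [DecidableEq V]
    {q : ℕ} (r : ℕ) (hq : q ≠ 0) : ∃ f : V → Fin q,
      #(((⊤ : SimpleGraph (Fin q)).comap f).cliqueFinset r) = turanNum (Fintype.card V) q r := by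
  obtain ⟨f, hf⟩ := exists_card_fiber_eq (V := V) (sum_balancedPart (Fintype.card V) hq)
  exact ⟨f, by simp only [card_cliqueFinset_comap_top, hf, turanNum]⟩

end CompleteMultipartite

section StarCover

open Finset

variable {V : Type*}

/-- The graph whose edges are the pairs contained in a member of `F`. For `F` the `r`-sets outside
`M`, its non-edges are the pairs whose full star lies in `M`. -/
def shadowGraph (F : Finset (Finset V)) : SimpleGraph V :=
  SimpleGraph.fromRel fun a b => ∃ E ∈ F, a ∈ E ∧ b ∈ E

lemma shadowGraph_adj {F : Finset (Finset V)} {a b : V} :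
    (shadowGraph F).Adj a b ↔ a ≠ b ∧ ∃ E ∈ F, a ∈ E ∧ b ∈ E := by
  simp only [shadowGraph, SimpleGraph.fromRel_adj, and_comm (a := b ∈ _), or_self]

lemma shadowGraph_le_iff {F : Finset (Finset V)} {G : SimpleGraph V} :
    shadowGraph F ≤ G ↔ ∀ E ∈ F, G.IsClique E := by
  refine ⟨fun h E hE a ha b hb hab => h (shadowGraph_adj.2 ⟨hab, E, hE, ha, hb⟩),
    fun h a b hab => ?_⟩
  obtain ⟨hne, E, hE, ha, hb⟩ := shadowGraph_adj.1 hab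
  exact h E hE ha hb hne

variable [Fintype V]

/-- `M` is a family of `r`-sets such that every `ℓ`-set contains a pair whose full star of `r`-sets
lies in `M`; the theorem is about the smallest such families. -/
def IsStarCover (ℓ r : ℕ) (M : Finset (Finset V)) : Prop :=
  M ⊆ univ.powersetCard r ∧
    ∀ L : Finset V, #L = ℓ → ∃ a ∈ L, ∃ b ∈ L, a ≠ b ∧
      ∀ E ∈ (univ : Finset V).powersetCard r, a ∈ E → b ∈ E → E ∈ M

variable {ℓ r : ℕ} {M : Finset (Finset V)}

lemma isStarCover_iff_cliqueFree [DecidableEq V] (hM : M ⊆ univ.powersetCard r) :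
    IsStarCover ℓ r M ↔ (shadowGraph (univ.powersetCard r \ M)).CliqueFree ℓ := by
  have star_subset_iff {a b : V} (hab : a ≠ b) :
      (∀ E ∈ univ.powersetCard r, a ∈ E → b ∈ E → E ∈ M) ↔
        ¬ (shadowGraph (univ.powersetCard r \ M)).Adj a b := by
    simp only [shadowGraph_adj, mem_sdiff, ne_eq, hab, not_false_eq_true, true_and]
    grind
  simp only [IsStarCover, hM, true_and, SimpleGraph.CliqueFree, SimpleGraph.isNClique_iff,
    and_comm (b := #_ = ℓ), not_and, SimpleGraph.isClique_iff, Set.Pairwise]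
  refine forall₂_congr fun L _ => ?_
  push Not
  exact ⟨fun ⟨a, ha, b, hb, hab, h⟩ => ⟨a, ha, b, hb, hab, (star_subset_iff hab).1 h⟩,
    fun ⟨a, ha, b, hb, hab, h⟩ => ⟨a, ha, b, hb, hab, (star_subset_iff hab).2 h⟩⟩

lemma isStarCover_powersetCard_sdiff_cliqueFinset [DecidableEq V] {G : SimpleGraph V}
    [DecidableRel G.Adj] (r : ℕ) (hG : G.CliqueFree ℓ) :
    IsStarCover ℓ r (univ.powersetCard r \ G.cliqueFinset r) := by
  refine (isStarCover_iff_cliqueFree sdiff_subset).2 <| hG.anti <|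
    shadowGraph_le_iff.2 fun E hE => ?_
  simp only [sdiff_sdiff_right_self, inf_eq_inter, mem_inter] at hE
  exact (SimpleGraph.mem_cliqueFinset_iff.1 hE.2).isClique

lemma card_powersetCard_sdiff_cliqueFinset [DecidableEq V] (G : SimpleGraph V)
    [DecidableRel G.Adj] (r : ℕ) :
    #(univ.powersetCard r \ G.cliqueFinset r) =
      (Fintype.card V).choose r - #(G.cliqueFinset r) := by
  have hsub : G.cliqueFinset r ⊆ univ.powersetCard r := fun E hE =>
    mem_powersetCard_univ.2 (SimpleGraph.mem_cliqueFinset_iff.1 hE).card_eq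
  rw [card_sdiff_of_subset hsub, card_powersetCard, card_univ]

lemma choose_sub_turanNum_le_card {q : ℕ} (hM : IsStarCover (q + 1) r M) :
    (Fintype.card V).choose r - turanNum (Fintype.card V) q r ≤ #M := by
  classical
  set G := shadowGraph (univ.powersetCard r \ M)
  have hG : G.CliqueFree (q + 1) := (isStarCover_iff_cliqueFree hM.1).1 hM
  have hsub : univ.powersetCard r \ M ⊆ G.cliqueFinset r := fun E hE =>
    SimpleGraph.mem_cliqueFinset_iff.2 ⟨shadowGraph_le_iff.1 le_rfl E hE,
      mem_powersetCard_univ.1 (mem_sdiff.1 hE).1⟩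
  rw [tsub_le_iff_left]
  calc (Fintype.card V).choose r
      = #((univ : Finset V).powersetCard r) := by rw [card_powersetCard, card_univ]
    _ ≤ #(univ.powersetCard r \ M) + #M := card_le_card_sdiff_add_card
    _ ≤ #(G.cliqueFinset r) + #M := by gcongr
    _ ≤ turanNum (Fintype.card V) q r + #M := by
      gcongr
      exact card_cliqueFinset_le_turanNum r hG

end StarCover

theorem min_star_cover_size_general {V : Type*} [Fintype V] {ℓ : ℕ} (r : ℕ) (hℓ : 2 ≤ ℓ) :
    IsLeast {m | ∃ M : Finset (Finset V), IsStarCover ℓ r M ∧ m = M.card}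
      ((Fintype.card V).choose r - turanNum (Fintype.card V) (ℓ - 1) r) := by
  classical
  obtain ⟨q, rfl⟩ : ∃ q, ℓ = q + 1 := ⟨ℓ - 1, by omega⟩
  rw [Nat.add_sub_cancel]
  obtain ⟨f, hf⟩ := exists_card_cliqueFinset_comap_top_eq_turanNum V (q := q) r (by omega)
  have hfree : ((⊤ : SimpleGraph (Fin q)).comap f).CliqueFree (q + 1) := by
    simpa only [Fintype.card_fin] using cliqueFree_comap_top f
  refine ⟨⟨_, isStarCover_powersetCard_sdiff_cliqueFinset r hfree, ?_⟩, ?_⟩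
  · rw [card_powersetCard_sdiff_cliqueFinset, hf]
  · rintro _ ⟨M, hM, rfl⟩
    exact choose_sub_turanNum_le_card hM

/-- the minimum size of a set `M` of `r`-subsets of `[n]` such that
every `ℓ`-subset `L ⊆ [n]` contains a pair `{a,b}` whose full star
`{E ∈ C([n],r) : {a,b} ⊆ E}` is contained in `M`, equals `C(n,r) - t_r(n,ℓ-1)`
(equivalently, this is the initial degree of the missing codegree-star ideal
`J^{(r)}_{n,ℓ}`). -/
theorem min_star_cover_size (n ℓ r : ℕ) (hn : 2 ≤ n) (hℓ : 2 ≤ ℓ) (hr : 2 ≤ r) :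
    IsLeast
      {m | ∃ M : Finset (Finset (Fin n)),
        M ⊆ Finset.univ.powersetCard r ∧
        (∀ L : Finset (Fin n), L.card = ℓ →
          ∃ a ∈ L, ∃ b ∈ L, a ≠ b ∧
            ∀ E ∈ (Finset.univ : Finset (Fin n)).powersetCard r,
              a ∈ E → b ∈ E → E ∈ M) ∧
        m = M.card}
      (Nat.choose n r - turanNum n (ℓ - 1) r) := by
  simpa only [IsStarCover, and_assoc, Fintype.card_fin] using
    min_star_cover_size_general (V := Fin n) r hℓ
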